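/- arXiv:0708.0135 — 5 statements merged into one kernel-verified Lean document; each statement's English description precedes it below -/
import Mathlib

section
/- Under conditions (2.1) and (2.2), the penalized model selector satisfies the oracle inequality: for every j ≥ 1, R(f̂) − inf_{f∈F} R(f) ≤ inf_{f∈F_j} R(f) − inf_{f∈F} R(f) + 9·δ(j); equivalently, R(f̂) ≤ inf_{f∈F_j} R(f) + 9·δ(j) for all j ≥ 1. -/
/-!
Write `r i`, `e i` for the infima of `R`, `Rn` over `F i`, and `k` for `khat`; compare `j` with `k`.

* If `k ≤ j`, then `fhat k ∈ F j`, so (2.1) on `F j` and the penalized minimality of `k` give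
  `R (fhat k) - r j ≤ 2 (e k - e j) + δ j ≤ 8 (δ j - δ k) + δ j ≤ 9 δ j`.
* If `j ≤ k`, then (2.1) on `F k` gives `R (fhat k) - r k ≤ δ k`, since `fhat k` has zero empirical
  excess risk there. Penalized minimality and (2.2) on `F k`, taken over `F j ⊆ F k`, give
  `4 (δ k - δ j) ≤ e j - e k ≤ 2 (r j - r k) + δ k`, so `δ k ≤ (2 / 3) (r j - r k) + (4 / 3) δ j`,
  which is at most `r j - r k + 9 δ j` because `r k ≤ r j`.
-/

open Set

/-- **Oracle inequality for penalized model selection (Lemma 1).**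
Under conditions (2.1) and (2.2), the penalized model selector `f̂ = f̂_{k̂}`
satisfies, for every `j ≥ 1`,
`R(f̂) − inf_F R ≤ inf_{F_j} R − inf_F R + 9 δ(j)`. -/
theorem oracle_inequality {α : Type*} (F : ℕ → Set α) (R Rn : α → ℝ) (δ : ℕ → ℝ)
    (hFne : ∀ j, (F j).Nonempty)
    (hnest : ∀ j, F j ⊆ F (j + 1))
    (hRbdd : BddBelow (R '' ⋃ i, F i))
    (hRnbdd : ∀ j, BddBelow (Rn '' F j))
    (hδ : ∀ j, 0 ≤ δ j)
    (fhat : ℕ → α) (hfhat_mem : ∀ j, fhat j ∈ F j)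
    (hERM : ∀ j, Rn (fhat j) = sInf (Rn '' F j))
    (khat : ℕ) (hkhat : 1 ≤ khat)
    (hpen : ∀ k, 1 ≤ k →
      sInf (Rn '' F khat) + 4 * δ khat ≤ sInf (Rn '' F k) + 4 * δ k)
    (h21 : ∀ j, 1 ≤ j → ∀ f ∈ F j,
      R f - sInf (R '' F j) ≤ 2 * (Rn f - sInf (Rn '' F j)) + δ j)
    (h22 : ∀ j, 1 ≤ j → ∀ f ∈ F j,
      Rn f - sInf (Rn '' F j) ≤ 2 * (R f - sInf (R '' F j)) + δ j) :
    ∀ j, 1 ≤ j →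
      R (fhat khat) - sInf (R '' ⋃ i, F i) ≤
        sInf (R '' F j) - sInf (R '' ⋃ i, F i) + 9 * δ j := by
  intro j hj
  have hmono : Monotone F := monotone_nat_of_le_succ hnest
  rcases le_total j khat with hjk | hkj
  · have hbdd : BddBelow (R '' F khat) :=
      hRbdd.mono (image_mono (subset_iUnion F khat))
    have hr : sInf (R '' F khat) ≤ sInf (R '' F j) :=
      csInf_le_csInf hbdd ((hFne j).image R) (image_mono (hmono hjk))
    -- Condition (2.2) on `F khat`, applied over all `f ∈ F j`; the infimum of `R` over `F j`
    -- need not be attained, so the bound is put in a form that passes to the infimum.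
    have key : (sInf (Rn '' F j) - sInf (Rn '' F khat) - δ khat) / 2 + sInf (R '' F khat)
        ≤ sInf (R '' F j) := by
      apply le_csInf ((hFne j).image R)
      rintro _ ⟨f, hf, rfl⟩
      have h1 := h22 khat hkhat f (hmono hjk hf)
      have h2 : sInf (Rn '' F j) ≤ Rn f := csInf_le (hRnbdd j) (mem_image_of_mem Rn hf)
      linarith
    have h1 := h21 khat hkhat (fhat khat) (hfhat_mem khat)
    rw [hERM khat] at h1
    linarith [hpen j hj, hδ j]
  · have h1 := h21 j hj (fhat khat) (hmono hkj (hfhat_mem khat))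
    rw [hERM khat] at h1
    linarith [hpen j hj, hδ khat]
end

section
/- Under condition (2.1), for every index j with j ≥ k̂, the selected function satisfies E_R(F_j; f̂) ≤ 9·δ(j), i.e., R(f̂) ≤ inf_{f∈F_j} R(f) + 9·δ(j). -/
open Set

/-- Under condition (2.1), for every index `j ≥ k̂` (with `j ≥ 1`), the selected
function `f̂ = f̂_{k̂}` satisfies `E_R(F_j; f̂) ≤ 9 δ(j)`, i.e.
`R(f̂) ≤ inf_{F_j} R + 9 δ(j)`. -/
theorem selected_excess_risk_large_j {α : Type*} (F : ℕ → Set α) (R Rn : α → ℝ)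
    (δ : ℕ → ℝ)
    (hFne : ∀ j, (F j).Nonempty)
    (hnest : ∀ j, F j ⊆ F (j + 1))
    (hRbdd : BddBelow (R '' ⋃ i, F i))
    (hRnbdd : ∀ j, BddBelow (Rn '' F j))
    (hδ : ∀ j, 0 ≤ δ j)
    (fhat : ℕ → α) (hfhat_mem : ∀ j, fhat j ∈ F j)
    (hERM : ∀ j, Rn (fhat j) = sInf (Rn '' F j))
    (khat : ℕ) (hkhat : 1 ≤ khat)
    (hpen : ∀ k, 1 ≤ k →
      sInf (Rn '' F khat) + 4 * δ khat ≤ sInf (Rn '' F k) + 4 * δ k)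
    (h21 : ∀ j, 1 ≤ j → ∀ f ∈ F j,
      R f - sInf (R '' F j) ≤ 2 * (Rn f - sInf (Rn '' F j)) + δ j) :
    ∀ j, khat ≤ j → R (fhat khat) - sInf (R '' F j) ≤ 9 * δ j := by
  intro j hj
  have hmem : fhat khat ∈ F j := monotone_nat_of_le_succ hnest hj (hfhat_mem khat)
  -- The penalty comparison at `k = j` bounds the empirical excess risk of `f̂` on `F j` by
  -- `4 δ(j) - 4 δ(k̂) ≤ 4 δ(j)`; condition (2.1) doubles this and adds `δ(j)`.
  linarith [h21 j (hkhat.trans hj) _ hmem, hpen j (hkhat.trans hj), hERM khat, hδ khat]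
end

section
/- Under condition (2.1), if j < k̂ and 9·δ(j) ≥ δ(k̂), then R(f̂) ≤ inf_{f∈F_j} R(f) + 9·δ(j). -/
open Set

/-- Under condition (2.1), if `1 ≤ j < k̂` and `9 δ(j) ≥ δ(k̂)`, then
`R(f̂) ≤ inf_{F_j} R + 9 δ(j)`. -/
theorem selected_excess_risk_small_j_large_delta {α : Type*} (F : ℕ → Set α)
    (R Rn : α → ℝ) (δ : ℕ → ℝ)
    (hFne : ∀ j, (F j).Nonempty)
    (hnest : ∀ j, F j ⊆ F (j + 1))
    (hRbdd : BddBelow (R '' ⋃ i, F i))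
    (hRnbdd : ∀ j, BddBelow (Rn '' F j))
    (hδ : ∀ j, 0 ≤ δ j)
    (fhat : ℕ → α) (hfhat_mem : ∀ j, fhat j ∈ F j)
    (hERM : ∀ j, Rn (fhat j) = sInf (Rn '' F j))
    (khat : ℕ) (hkhat : 1 ≤ khat)
    (hpen : ∀ k, 1 ≤ k →
      sInf (Rn '' F khat) + 4 * δ khat ≤ sInf (Rn '' F k) + 4 * δ k)
    (h21 : ∀ j, 1 ≤ j → ∀ f ∈ F j,
      R f - sInf (R '' F j) ≤ 2 * (Rn f - sInf (Rn '' F j)) + δ j) :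
    ∀ j, 1 ≤ j → j < khat → δ khat ≤ 9 * δ j →
      R (fhat khat) ≤ sInf (R '' F j) + 9 * δ j := by
  intro j _ hjk hδj
  -- The empirical excess risk of the minimizer vanishes, so (2.1) at `k̂` leaves only `δ(k̂)`.
  have h_excess := h21 khat hkhat (fhat khat) (hfhat_mem khat)
  rw [hERM khat] at h_excess
  -- By nestedness, the infimum of `R` over `F k̂` is at most the one over `F j`.
  have h_inf : sInf (R '' F khat) ≤ sInf (R '' F j) :=
    csInf_le_csInf (hRbdd.mono (image_mono (subset_iUnion F khat)))
      ((hFne j).image R) (image_mono (monotone_nat_of_le_succ hnest hjk.le))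
  linarith
end

section
/- Under condition (2.2), if j < k̂ and 9·δ(j) < δ(k̂), then inf_{f∈F_j} E_R(F_{k̂}; f) ≥ δ(k̂); i.e., every f ∈ F_j satisfies R(f) ≥ inf_{g∈F_{k̂}} R(g) + δ(k̂). -/
open Set

/-- Under condition (2.2), if `1 ≤ j < k̂` and `9 δ(j) < δ(k̂)`, then
`inf_{f ∈ F_j} E_R(F_{k̂}; f) ≥ δ(k̂)`; i.e. every `f ∈ F_j` satisfies
`R(f) ≥ inf_{F_{k̂}} R + δ(k̂)`. -/
theorem small_models_far_from_khat {α : Type*} (F : ℕ → Set α) (R Rn : α → ℝ)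
    (δ : ℕ → ℝ)
    (hFne : ∀ j, (F j).Nonempty)
    (hnest : ∀ j, F j ⊆ F (j + 1))
    (hRbdd : BddBelow (R '' ⋃ i, F i))
    (hRnbdd : ∀ j, BddBelow (Rn '' F j))
    (hδ : ∀ j, 0 ≤ δ j)
    (khat : ℕ) (hkhat : 1 ≤ khat)
    (hpen : ∀ k, 1 ≤ k →
      sInf (Rn '' F khat) + 4 * δ khat ≤ sInf (Rn '' F k) + 4 * δ k)
    (h22 : ∀ j, 1 ≤ j → ∀ f ∈ F j,
      Rn f - sInf (Rn '' F j) ≤ 2 * (R f - sInf (R '' F j)) + δ j) :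
    ∀ j, 1 ≤ j → j < khat → 9 * δ j < δ khat →
      ∀ f ∈ F j, sInf (R '' F khat) + δ khat ≤ R f := by
  intro j hj hlt h9 f hf
  have hfk : f ∈ F khat := monotone_nat_of_le_succ hnest hlt.le hf
  have hinf : sInf (Rn '' F j) ≤ Rn f := csInf_le (hRnbdd j) (mem_image_of_mem Rn hf)
  -- The penalty forces `4 (δ khat - δ j)` of empirical excess risk of `f` over `F khat`;
  -- the upper bound `h22` at `khat` turns this into `(3 δ khat - 4 δ j) / 2 ≥ δ khat` of true
  -- excess risk.
  linarith [hpen j hj, h22 khat hkhat f hfk, hδ j]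
end

section
/- Under conditions (2.1) and (2.2), if j < k̂ and 9·δ(j) < δ(k̂), then R(f̂) ≤ inf_{f∈F_j} R(f). -/
open Set

/-- Under conditions (2.1) and (2.2), if `1 ≤ j < k̂` and `9 δ(j) < δ(k̂)`, then
`R(f̂) ≤ inf_{F_j} R`. -/
theorem selected_beats_small_models {α : Type*} (F : ℕ → Set α) (R Rn : α → ℝ)
    (δ : ℕ → ℝ)
    (hFne : ∀ j, (F j).Nonempty)
    (hnest : ∀ j, F j ⊆ F (j + 1))
    (hRbdd : BddBelow (R '' ⋃ i, F i))
    (hRnbdd : ∀ j, BddBelow (Rn '' F j))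
    (hδ : ∀ j, 0 ≤ δ j)
    (fhat : ℕ → α) (hfhat_mem : ∀ j, fhat j ∈ F j)
    (hERM : ∀ j, Rn (fhat j) = sInf (Rn '' F j))
    (khat : ℕ) (hkhat : 1 ≤ khat)
    (hpen : ∀ k, 1 ≤ k →
      sInf (Rn '' F khat) + 4 * δ khat ≤ sInf (Rn '' F k) + 4 * δ k)
    (h21 : ∀ j, 1 ≤ j → ∀ f ∈ F j,
      R f - sInf (R '' F j) ≤ 2 * (Rn f - sInf (Rn '' F j)) + δ j)
    (h22 : ∀ j, 1 ≤ j → ∀ f ∈ F j,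
      Rn f - sInf (Rn '' F j) ≤ 2 * (R f - sInf (R '' F j)) + δ j) :
    ∀ j, 1 ≤ j → j < khat → 9 * δ j < δ khat →
      R (fhat khat) ≤ sInf (R '' F j) := by
  intro j hj hjk hδj
  refine le_csInf ((hFne j).image R) ?_
  rintro _ ⟨f, hf, rfl⟩
  have hfK : f ∈ F khat := monotone_nat_of_le_succ hnest hjk.le hf
  have hB : sInf (Rn '' F j) ≤ Rn f := csInf_le (hRnbdd j) (mem_image_of_mem Rn hf)
  -- The minimizer has zero empirical excess risk, so `h21` gives `R f̂ ≤ inf_{F_k̂} R + δ k̂`.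
  have h1 := h21 khat hkhat (fhat khat) (hfhat_mem khat)
  rw [hERM khat] at h1
  -- The penalty forces the empirical excess risk of `f` over `F_k̂` to be at least
  -- `4 (δ k̂ - δ j)`, so `h22` gives `R f - inf_{F_k̂} R ≥ (3 δ k̂ - 4 δ j) / 2 ≥ δ k̂`.
  have h2 := h22 khat hkhat f hfK
  linarith [hpen j hj, hδ j]
end
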